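/- Let N : ΛV → ΛV be the normal ordering map, i.e. the unique linear map with N(v₁ ∧ ⋯ ∧ v_n) = Σ_{P ∈ 𝔓_n} (−1)^P (−1)^{|P|} (Π_{(i,j) ∈ P} B(v_i, v_j)) · v_{k₁} ∧ ⋯ ∧ v_{k_{n−2|P|}}. Then for every n ≥ 1 and all v₁, …, v_n ∈ V, N(v_n ∧ v_{n−1} ∧ ⋯ ∧ v₁) = v_n ∧ N(v_{n−1} ∧ ⋯ ∧ v₁) + Σ_{i=1}^{n−1} (−1)^i · B(v_n, v_{n−i}) · N(v_{n−1} ∧ ⋯ ∧ v̂_{n−i} ∧ ⋯ ∧ v₁), where the hat indicates that the factor v_{n−i} is omitted from the wedge product. -/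

import Mathlib

/-!
The closed formula for `N` is split according to the partner of the least index `0`.

If `0` is unpaired, the pairing is a shifted pairing of the other `n` indices. In the list defining
its sign, `0` stands right after the paired indices; these are even in number, so the sign does not
change (`pairingSign_succ`), and `u 0` is the first factor of the remaining wedge. These terms sum
to `u 0 ∧ N(u 1 ∧ ⋯ ∧ u n)` (`normalOrderRHS_succ`).

If `0` is paired with `i`, removing the pair `(0, i)` leaves an arbitrary pairing of the indices
other than `0` and `i`. The pair `(0, i)` is lexicographically least, so the list defining the sign
begins with `0, i`; this creates exactly `i - 1` inversions (`pairingSign_addPair`). With the extra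
factor `-1` for the additional pair, these terms sum to `(-1) ^ i B(u 0, u i)` times the closed
formula for the wedge with `u 0` and `u i` omitted (`sum_with_pair_eq`).

Signs are computed by the recursion `listSign_cons` for the number of inversions, and all
reindexings are along order embeddings, which commute with every sorted list involved.
-/

/-- A partial pairing of `[n] = {1,…,n}` (here `Fin n`): a finite set of pairs `(i,j)`
with `i < j`, all endpoints pairwise distinct. -/
def IsPartialPairing {n : ℕ} (P : Finset (Fin n × Fin n)) : Prop :=
  (∀ p ∈ P, p.1 < p.2) ∧
    ∀ p ∈ P, ∀ q ∈ P, p ≠ q →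
      p.1 ≠ q.1 ∧ p.1 ≠ q.2 ∧ p.2 ≠ q.1 ∧ p.2 ≠ q.2

instance {n : ℕ} : DecidablePred (IsPartialPairing (n := n)) := fun P => by
  unfold IsPartialPairing; infer_instance

/-- The finite set `𝔓_n` of partial pairings of `[n]`. -/
def partialPairings (n : ℕ) : Finset (Finset (Fin n × Fin n)) :=
  Finset.univ.filter IsPartialPairing

/-- `∪P`: the set of indices used by the pairing `P`. -/
def pairedIndices {n : ℕ} (P : Finset (Fin n × Fin n)) : Finset (Fin n) :=
  P.biUnion fun p => {p.1, p.2}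

/-- The list `i₁, j₁, i₂, j₂, …` of paired indices, the pairs being listed in
lexicographic order (the sign below does not depend on this choice of order). -/
def pairList {n : ℕ} (P : Finset (Fin n × Fin n)) : List (Fin n) :=
  ((P.image fun p => toLex p).sort (· ≤ ·)).flatMap fun q => [(ofLex q).1, (ofLex q).2]

/-- The increasing list `k₁ < ⋯ < k_{n−2p}` of unpaired indices. -/
def unpairedList {n : ℕ} (P : Finset (Fin n × Fin n)) : List (Fin n) :=
  (Finset.univ \ pairedIndices P).sort (· ≤ ·)

/-- The sign of a list of indices, as `(−1)^{number of inversions}`; for a duplicate-free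
enumeration of `Fin n` this is the sign of the corresponding permutation. -/
def listSign {n : ℕ} (L : List (Fin n)) : ℤ :=
  (-1) ^ (Finset.univ.filter fun ab : Fin L.length × Fin L.length =>
      ab.1 < ab.2 ∧ L.get ab.2 < L.get ab.1).card

/-- `(−1)^P`: the signature of the permutation `(1,…,n) ↦ (i₁, j₁, …, i_p, j_p, k₁, …)`. -/
def pairingSign {n : ℕ} (P : Finset (Fin n × Fin n)) : ℤ :=
  listSign (pairList P ++ unpairedList P)

noncomputable section

variable {V : Type} [AddCommGroup V] [Module ℂ V]

/-- The wedge product `v_{l₁} ∧ ⋯ ∧ v_{l_m}` over a list `l` of indices. -/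
def wedgeList {n : ℕ} (v : Fin n → V) (l : List (Fin n)) : ExteriorAlgebra ℂ V :=
  (l.map fun k => ExteriorAlgebra.ι ℂ (v k)).prod

/-- The wedge product `v₁ ∧ ⋯ ∧ v_n`. -/
def wedgeAll {n : ℕ} (v : Fin n → V) : ExteriorAlgebra ℂ V :=
  wedgeList v (List.finRange n)

/-- The right-hand side of the closed formula for normal ordering:
`Σ_{P ∈ 𝔓_n} (−1)^P (−1)^{|P|} (Π_{(i,j)∈P} B(v_i,v_j)) · v_{k₁} ∧ ⋯ ∧ v_{k_{n−2|P|}}`. -/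
def normalOrderRHS (B : V →ₗ[ℂ] V →ₗ[ℂ] ℂ) {n : ℕ} (v : Fin n → V) :
    ExteriorAlgebra ℂ V :=
  ∑ P ∈ partialPairings n,
    ((pairingSign P : ℂ) * (-1 : ℂ) ^ P.card * ∏ p ∈ P, B (v p.1) (v p.2)) •
      wedgeList v (unpairedList P)

/-- `N` is a normal ordering map for the Wick contraction `B`: it is linear and satisfies
the closed formula on all wedges of vectors. -/
def IsNormalOrdering (B : V →ₗ[ℂ] V →ₗ[ℂ] ℂ)
    (N : ExteriorAlgebra ℂ V →ₗ[ℂ] ExteriorAlgebra ℂ V) : Prop :=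
  ∀ (n : ℕ) (v : Fin n → V), N (wedgeAll v) = normalOrderRHS B v

end

/-! ### Signs of lists -/

theorem countP_eq_card_get {α : Type*} (p : α → Prop) [DecidablePred p] (L : List α) :
    (Finset.univ.filter fun i : Fin L.length => p (L.get i)).card = L.countP (fun x => decide (p x)) := by
  induction L with
  | nil => simp
  | cons a L ih =>
    rw [Finset.card_filter] at ih ⊢
    rw [List.countP_cons, ← ih]
    refine (Fin.sum_univ_succ (n := L.length) _).trans ?_
    simp only [decide_eq_true_eq]
    exact add_comm _ _

/-- Putting `a` in front adds one inversion for each entry of `L` below `a`. -/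
theorem listSign_cons {n : ℕ} (a : Fin n) (L : List (Fin n)) :
    listSign (a :: L) = (-1) ^ L.countP (fun x => decide (x < a)) * listSign L := by
  unfold listSign
  rw [← pow_add, ← countP_eq_card_get (fun x => x < a)]
  congr 1
  simp only [Finset.card_filter, Fintype.sum_prod_type]
  refine (Fin.sum_univ_succ (n := L.length) _).trans ?_
  congr 1
  · refine (Fin.sum_univ_succ (n := L.length) _).trans ?_
    simp
  · refine Finset.sum_congr rfl fun i _ => ?_
    refine (Fin.sum_univ_succ (n := L.length) _).trans ?_
    simp

theorem listSign_map {m n : ℕ} (e : Fin m ↪o Fin n) (L : List (Fin m)) :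
    listSign (L.map e) = listSign L := by
  induction L with
  | nil => rfl
  | cons a L ih =>
    rw [List.map_cons, listSign_cons, listSign_cons, ih, List.countP_map]
    simp [Function.comp_def]

/-- The least index, standing after the block `A`, is inverted with exactly the entries of `A`. -/
theorem listSign_insert_zero {n : ℕ} (A C : List (Fin n)) :
    listSign (A.map (Fin.succOrderEmb n) ++ 0 :: C.map (Fin.succOrderEmb n)) =
      (-1) ^ A.length * listSign (A ++ C) := by
  induction A with
  | nil =>
    rw [List.map_nil, List.nil_append, listSign_cons, listSign_map]
    simp
  | cons a A ih =>
    rw [List.map_cons, List.cons_append, List.cons_append, listSign_cons, ih, listSign_cons]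
    simp only [List.countP_append, List.countP_cons, List.countP_map, List.length_cons, pow_add]
    simp [Function.comp_def]
    ring

/-! ### Relabelling pairings along order embeddings -/

/-- The pairing obtained from `P` by renaming the indices along an order embedding `e`. -/
def relabel {m n : ℕ} (e : Fin m ↪o Fin n) (P : Finset (Fin m × Fin m)) :
    Finset (Fin n × Fin n) :=
  P.map (e.toEmbedding.prodMap e.toEmbedding)

theorem mem_relabel {m n : ℕ} (e : Fin m ↪o Fin n) (P : Finset (Fin m × Fin m))
    (q : Fin n × Fin n) : q ∈ relabel e P ↔ ∃ p ∈ P, (e p.1, e p.2) = q := by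
  simp [relabel, Function.Embedding.prodMap]

theorem relabel_injective {m n : ℕ} (e : Fin m ↪o Fin n) :
    Function.Injective (relabel e) :=
  Finset.map_injective _

theorem isPartialPairing_relabel {m n : ℕ} (e : Fin m ↪o Fin n) (P : Finset (Fin m × Fin m)) :
    IsPartialPairing (relabel e P) ↔ IsPartialPairing P := by
  simp only [IsPartialPairing, relabel, Finset.forall_mem_map]
  simp [Function.Embedding.prodMap, Prod.ext_iff]

theorem pairedIndices_relabel {m n : ℕ} (e : Fin m ↪o Fin n) (P : Finset (Fin m × Fin m)) :
    pairedIndices (relabel e P) = (pairedIndices P).map e.toEmbedding := by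
  ext k
  simp only [pairedIndices, Finset.mem_biUnion, mem_relabel, Finset.mem_map]
  constructor
  · rintro ⟨_, ⟨p, hp, rfl⟩, hk⟩
    simp only [Finset.mem_insert, Finset.mem_singleton] at hk
    rcases hk with rfl | rfl
    · exact ⟨p.1, ⟨p, hp, by simp⟩, rfl⟩
    · exact ⟨p.2, ⟨p, hp, by simp⟩, rfl⟩
  · rintro ⟨a, ⟨p, hp, ha⟩, rfl⟩
    refine ⟨_, ⟨p, hp, rfl⟩, ?_⟩
    simp only [Finset.mem_insert, Finset.mem_singleton] at ha
    rcases ha with rfl | rfl <;> simp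

/-- An order embedding preserves the lexicographic order of pairs, so it carries the sorted list
of pairs to the sorted list of relabelled pairs. -/
theorem lex_sort_relabel {m n : ℕ} (e : Fin m ↪o Fin n) (P : Finset (Fin m × Fin m)) :
    ((relabel e P).image fun p => toLex p).sort (· ≤ ·) =
      ((P.image fun p => toLex p).sort (· ≤ ·)).map
        fun q => toLex (e (ofLex q).1, e (ofLex q).2) := by
  have hmono : StrictMono (fun q : Fin m ×ₗ Fin m => toLex (e (ofLex q).1, e (ofLex q).2)) := by
    intro a b h
    rw [Prod.Lex.lt_iff] at h ⊢
    simpa using h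
  refine (Finset.sortedLT_sort _).eq_of_mem_iff ?_ ?_
  · exact hmono.sortedLT_listMap.2 (Finset.sortedLT_sort _)
  · intro q
    simp [mem_relabel]

theorem pairList_relabel {m n : ℕ} (e : Fin m ↪o Fin n) (P : Finset (Fin m × Fin m)) :
    pairList (relabel e P) = (pairList P).map e := by
  unfold pairList
  rw [lex_sort_relabel, List.flatMap_map, List.map_flatMap]
  simp

theorem unpairedList_eq {n : ℕ} (P : Finset (Fin n × Fin n)) (L : List (Fin n))
    (hL : L.SortedLT) (h : ∀ k, k ∈ L ↔ k ∉ pairedIndices P) : unpairedList P = L := by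
  refine (Finset.sortedLT_sort _).eq_of_mem_iff hL fun k => ?_
  simp [h]

theorem mem_unpairedList {n : ℕ} (P : Finset (Fin n × Fin n)) (k : Fin n) :
    k ∈ unpairedList P ↔ k ∉ pairedIndices P := by
  simp [unpairedList]

theorem mem_pairList {n : ℕ} (P : Finset (Fin n × Fin n)) (k : Fin n) :
    k ∈ pairList P ↔ k ∈ pairedIndices P := by
  simp [pairList, pairedIndices]

theorem length_pairList {n : ℕ} (P : Finset (Fin n × Fin n)) :
    (pairList P).length = 2 * P.card := by
  simp [pairList, List.length_flatMap, Finset.card_image_of_injective, toLex.injective, mul_comm]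

theorem mem_lex_sort {n : ℕ} (P : Finset (Fin n × Fin n)) (q : Fin n ×ₗ Fin n) :
    q ∈ (P.image fun p => toLex p).sort (· ≤ ·) ↔ ofLex q ∈ P := by
  rw [Finset.mem_sort, Finset.mem_image]
  exact ⟨fun ⟨_, hp, h⟩ => h ▸ hp, fun h => ⟨_, h, rfl⟩⟩

/-- For a partial pairing, the list whose sign is taken enumerates every index exactly once. -/
theorem perm_finRange {n : ℕ} {P : Finset (Fin n × Fin n)} (hP : IsPartialPairing P) :
    (pairList P ++ unpairedList P).Perm (List.finRange n) := by
  rw [List.perm_ext_iff_of_nodup _ (List.nodup_finRange n)]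
  · intro k
    simp [mem_pairList, mem_unpairedList, em]
  · refine List.nodup_append'.2 ⟨?_, Finset.sort_nodup _ _, ?_⟩
    · refine List.nodup_flatMap.2 ⟨?_, ?_⟩
      · intro q hq
        have := hP.1 (ofLex q) ((mem_lex_sort P q).1 hq)
        simpa using this.ne
      · refine List.Pairwise.imp_of_mem ?_ (Finset.sort_nodup _ _)
        intro a b ha hb hab
        have := hP.2 (ofLex a) ((mem_lex_sort P a).1 ha) (ofLex b) ((mem_lex_sort P b).1 hb) (by simpa using hab)
        simp [Function.onFun]
        tauto
    · intro k hk hu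
      rw [mem_pairList] at hk
      rw [mem_unpairedList] at hu
      exact hu hk

/-! ### Adjoining a pair containing the least index -/

/-- The order embedding of `Fin m` into `Fin (m + 2)` whose range omits exactly `0` and `j.succ`
(see `exists_skipEmb`). -/
def skipEmb {m : ℕ} (j : Fin (m + 1)) : Fin m ↪o Fin (m + 2) :=
  (Fin.succAboveOrderEmb j).trans (Fin.succOrderEmb (m + 1))

theorem skipEmb_apply {m : ℕ} (j : Fin (m + 1)) (k : Fin m) :
    skipEmb j k = (j.succAbove k).succ := rfl

theorem exists_skipEmb {m : ℕ} (j : Fin (m + 1)) (k : Fin (m + 2)) :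
    (∃ l, skipEmb j l = k) ↔ k ≠ 0 ∧ k ≠ j.succ := by
  cases k using Fin.cases with
  | zero => simp [skipEmb_apply, Fin.succ_ne_zero]
  | succ k => simp [skipEmb_apply, Fin.exists_succAbove_eq_iff]

/-- The pairing of `m + 2` indices consisting of the pair `(0, j.succ)` together with `P`, placed on
the remaining indices in increasing order. -/
def addPair {m : ℕ} (j : Fin (m + 1)) (P : Finset (Fin m × Fin m)) :
    Finset (Fin (m + 2) × Fin (m + 2)) :=
  insert (0, j.succ) (relabel (skipEmb j) P)

theorem not_mem_relabel {m : ℕ} (j : Fin (m + 1)) (P : Finset (Fin m × Fin m)) :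
    ((0, j.succ) : Fin (m + 2) × Fin (m + 2)) ∉ relabel (skipEmb j) P := by
  simp [mem_relabel, skipEmb_apply, Fin.succ_ne_zero]

/-- The new pair is lexicographically least, so it is listed first. -/
theorem pairList_addPair {m : ℕ} (j : Fin (m + 1)) (P : Finset (Fin m × Fin m)) :
    pairList (addPair j P) = 0 :: j.succ :: (pairList P).map (skipEmb j) := by
  rw [← pairList_relabel]
  unfold pairList addPair
  rw [Finset.image_insert, Finset.sort_insert]
  · simp
  · intro q hq
    obtain ⟨r, hr, rfl⟩ := Finset.mem_image.1 hq
    obtain ⟨p, _, rfl⟩ := (mem_relabel _ _ _).1 hr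
    rw [Prod.Lex.le_iff]
    simp [skipEmb_apply, Fin.succ_pos]
  · intro h
    obtain ⟨q, hq, h⟩ := Finset.mem_image.1 h
    rw [toLex.injective h] at hq
    exact not_mem_relabel j P hq

theorem unpairedList_addPair {m : ℕ} (j : Fin (m + 1)) (P : Finset (Fin m × Fin m)) :
    unpairedList (addPair j P) = (unpairedList P).map (skipEmb j) := by
  refine unpairedList_eq _ _ ((skipEmb j).strictMono.sortedLT_listMap.2
    (Finset.sortedLT_sort _)) fun k => ?_
  have h1 : pairedIndices (addPair j P) =
      {0, j.succ} ∪ (pairedIndices P).map (skipEmb j).toEmbedding := by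
    rw [← pairedIndices_relabel]
    simp [pairedIndices, addPair, Finset.biUnion_insert]
  have h2 := exists_skipEmb j k
  rw [h1]
  simp only [List.mem_map, mem_unpairedList, Finset.mem_union, Finset.mem_insert,
    Finset.mem_singleton, Finset.mem_map, not_or, not_exists, not_and]
  rw [← ne_eq, ← ne_eq, ← h2]
  constructor
  · rintro ⟨a, ha, rfl⟩
    refine ⟨⟨a, rfl⟩, fun x hx h => ha ?_⟩
    rwa [← (skipEmb j).injective h]
  · rintro ⟨⟨a, rfl⟩, h⟩
    exact ⟨a, fun ha => h a ha rfl, rfl⟩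

theorem unpairedList_succ {n : ℕ} (P : Finset (Fin n × Fin n)) :
    unpairedList (relabel (Fin.succOrderEmb n) P) =
      0 :: (unpairedList P).map (Fin.succOrderEmb n) := by
  refine unpairedList_eq _ _ ?_ fun k => ?_
  · rw [List.sortedLT_iff_pairwise, List.pairwise_cons]
    refine ⟨by simp, ?_⟩
    rw [← List.sortedLT_iff_pairwise]
    exact (Fin.succOrderEmb n).strictMono.sortedLT_listMap.2 (Finset.sortedLT_sort _)
  · rw [pairedIndices_relabel]
    cases k using Fin.cases <;> simp [mem_unpairedList, Fin.succ_ne_zero]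

/-- A new least index left unpaired stands after an even number of paired indices, so the sign
is unchanged. -/
theorem pairingSign_succ {n : ℕ} (P : Finset (Fin n × Fin n)) :
    pairingSign (relabel (Fin.succOrderEmb n) P) = pairingSign P := by
  rw [pairingSign, pairingSign, pairList_relabel, unpairedList_succ, listSign_insert_zero,
    length_pairList, pow_mul]
  simp

/-- In the list `0, j.succ, …` the entry `0` has no inversions with later entries, and `j.succ` is
inverted with the `j` indices strictly between `0` and `j.succ`. -/
theorem pairingSign_addPair {m : ℕ} (j : Fin (m + 1)) {P : Finset (Fin m × Fin m)}
    (hP : IsPartialPairing P) :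
    pairingSign (addPair j P) = (-1) ^ (j : ℕ) * pairingSign P := by
  rw [pairingSign, pairingSign, pairList_addPair, unpairedList_addPair, List.cons_append,
    List.cons_append, ← List.map_append, listSign_cons, listSign_cons, listSign_map]
  have h0 : ∀ L : List (Fin (m + 2)), L.countP (fun x => decide (x < 0)) = 0 := by simp
  rw [h0, List.countP_map, (perm_finRange hP).countP_eq, pow_zero, one_mul]
  congr 2
  have hc : (List.finRange m).countP ((fun x => decide (x < j.succ)) ∘ skipEmb j) =
      (Finset.univ.filter fun k : Fin m => (k : ℕ) < j).card := by
    rw [List.countP_eq_length_filter, ← List.toFinset_card_of_nodup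
      ((List.nodup_finRange m).filter _)]
    congr 1
    ext k
    simp [skipEmb_apply, Fin.succAbove_lt_iff_castSucc_lt]
    exact Fin.lt_def
  rw [hc, Fin.card_filter_val_lt]
  exact min_eq_right (Nat.lt_succ_iff.1 j.2)

/-! ### Decomposing sums over partial pairings -/

theorem mem_partialPairings {n : ℕ} {P : Finset (Fin n × Fin n)} :
    P ∈ partialPairings n ↔ IsPartialPairing P := by
  simp [partialPairings]

/-- The pairings leaving `0` unpaired are the shifts of pairings of `n` indices. -/
theorem zero_not_mem_iff {n : ℕ} {P : Finset (Fin (n + 1) × Fin (n + 1))} :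
    0 ∉ pairedIndices P ↔ ∃ Q, relabel (Fin.succOrderEmb n) Q = P := by
  constructor
  · intro h
    refine ⟨Finset.univ.filter fun p => (p.1.succ, p.2.succ) ∈ P, ?_⟩
    ext ⟨a, b⟩
    simp only [mem_relabel, Finset.mem_filter_univ]
    constructor
    · rintro ⟨p, hp, h⟩
      exact h ▸ hp
    · intro hab
      have h1 : a ≠ 0 := fun h0 => h (Finset.mem_biUnion.2 ⟨_, hab, by simp [h0]⟩)
      have h2 : b ≠ 0 := fun h0 => h (Finset.mem_biUnion.2 ⟨_, hab, by simp [h0]⟩)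
      exact ⟨(a.pred h1, b.pred h2), by simpa using hab, by simp⟩
  · rintro ⟨Q, rfl⟩
    simp [pairedIndices_relabel, Fin.succ_ne_zero]

theorem isPartialPairing_addPair {m : ℕ} (j : Fin (m + 1)) (P : Finset (Fin m × Fin m)) :
    IsPartialPairing (addPair j P) ↔ IsPartialPairing P := by
  rw [← isPartialPairing_relabel (skipEmb j)]
  constructor
  · exact fun h => ⟨fun p hp => h.1 p (Finset.mem_insert_of_mem hp), fun p hp q hq =>
      h.2 p (Finset.mem_insert_of_mem hp) q (Finset.mem_insert_of_mem hq)⟩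
  · intro h
    have key : ∀ q ∈ relabel (skipEmb j) P, q.1 ≠ 0 ∧ q.1 ≠ j.succ ∧ q.2 ≠ 0 ∧ q.2 ≠ j.succ := by
      intro q hq
      obtain ⟨p, _, rfl⟩ := (mem_relabel _ _ _).1 hq
      have h1 := (exists_skipEmb j _).1 ⟨p.1, rfl⟩
      have h2 := (exists_skipEmb j _).1 ⟨p.2, rfl⟩
      exact ⟨h1.1, h1.2, h2.1, h2.2⟩
    refine ⟨fun p hp => ?_, fun p hp q hq hpq => ?_⟩
    · rcases Finset.mem_insert.1 hp with rfl | hp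
      · exact Fin.succ_pos j
      · exact h.1 p hp
    · rcases Finset.mem_insert.1 hp with rfl | hp <;> rcases Finset.mem_insert.1 hq with rfl | hq
      · exact absurd rfl hpq
      · have := key q hq
        exact ⟨this.1.symm, this.2.2.1.symm, this.2.1.symm, this.2.2.2.symm⟩
      · have := key p hp
        exact ⟨this.1, this.2.1, this.2.2.1, this.2.2.2⟩
      · exact h.2 p hp q hq hpq

/-- Every pairing containing `(0, j.succ)` arises from `addPair j`. -/
theorem exists_addPair {m : ℕ} (j : Fin (m + 1)) {P : Finset (Fin (m + 2) × Fin (m + 2))}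
    (hP : IsPartialPairing P) (h : (0, j.succ) ∈ P) : ∃ Q, addPair j Q = P := by
  refine ⟨Finset.univ.filter fun p => (skipEmb j p.1, skipEmb j p.2) ∈ P, ?_⟩
  ext ⟨a, b⟩
  simp only [addPair, Finset.mem_insert, mem_relabel, Finset.mem_filter_univ]
  constructor
  · rintro (h' | ⟨p, hp, h'⟩)
    · exact h' ▸ h
    · exact h' ▸ hp
  · intro hab
    refine or_iff_not_imp_left.2 fun hne => ?_
    obtain ⟨h1, h2, h3, h4⟩ := hP.2 _ hab _ h hne
    obtain ⟨x, rfl⟩ := (exists_skipEmb j a).2 ⟨h1, h2⟩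
    obtain ⟨y, rfl⟩ := (exists_skipEmb j b).2 ⟨h3, h4⟩
    exact ⟨(x, y), hab, rfl⟩

theorem addPair_injective {m : ℕ} (j : Fin (m + 1)) : Function.Injective (addPair j) := by
  intro P Q h
  have := congrArg (fun S => Finset.erase S (0, j.succ)) h
  simp only [addPair, Finset.erase_insert (not_mem_relabel j _)] at this
  exact relabel_injective _ this

/-- Partial pairings of `n + 1` indices split according to the partner, if any, of the index `0`. -/
theorem sum_partialPairings_succ {M : Type*} [AddCommMonoid M] (n : ℕ)
    (f : Finset (Fin (n + 1) × Fin (n + 1)) → M) :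
    ∑ P ∈ partialPairings (n + 1), f P =
      ∑ P ∈ partialPairings n, f (relabel (Fin.succOrderEmb n) P) +
        ∑ j : Fin n, ∑ P ∈ partialPairings (n + 1) with (0, j.succ) ∈ P, f P := by
  rw [← Finset.sum_filter_not_add_sum_filter _ (fun P => 0 ∈ pairedIndices P)]
  congr 1
  · symm
    refine Finset.sum_nbij (relabel (Fin.succOrderEmb n)) ?_ (relabel_injective _).injOn ?_
      fun _ _ => rfl
    · intro P hP
      simp only [Finset.mem_filter, mem_partialPairings, isPartialPairing_relabel] at hP ⊢
      exact ⟨hP, zero_not_mem_iff.2 ⟨P, rfl⟩⟩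
    · intro P hP
      simp only [Finset.coe_filter, Set.mem_ofPred_eq] at hP
      obtain ⟨Q, rfl⟩ := zero_not_mem_iff.1 hP.2
      refine ⟨Q, ?_, rfl⟩
      simpa [mem_partialPairings, isPartialPairing_relabel] using hP.1
  · rw [← Finset.sum_biUnion]
    · refine Finset.sum_congr ?_ fun _ _ => rfl
      ext P
      simp only [Finset.mem_filter, Finset.mem_biUnion, Finset.mem_univ, true_and,
        mem_partialPairings, exists_and_left]
      refine and_congr_right fun hP => ?_
      simp only [pairedIndices, Finset.mem_biUnion, Finset.mem_insert, Finset.mem_singleton]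
      constructor
      · rintro ⟨⟨a, b⟩, hp, h⟩
        have hlt : a < b := hP.1 _ hp
        -- The least index can only be the first entry of its pair.
        rcases h with h | h
        · subst h
          exact ⟨b.pred hlt.ne', by simpa using hp⟩
        · subst h
          exact absurd hlt (Fin.not_lt_zero a)
      · rintro ⟨j, hj⟩
        exact ⟨_, hj, Or.inl rfl⟩
    · intro j _ k _ hjk
      refine Finset.disjoint_left.2 fun P hj hk => ?_
      simp only [Finset.mem_filter, mem_partialPairings] at hj hk
      refine (hj.1.2 _ hj.2 _ hk.2 ?_).1 rfl
      simpa using hjk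

theorem sum_with_pair {M : Type*} [AddCommMonoid M] {m : ℕ} (j : Fin (m + 1))
    (f : Finset (Fin (m + 2) × Fin (m + 2)) → M) :
    ∑ P ∈ partialPairings (m + 2) with (0, j.succ) ∈ P, f P =
      ∑ P ∈ partialPairings m, f (addPair j P) := by
  symm
  refine Finset.sum_nbij (addPair j) ?_ (addPair_injective j).injOn ?_ fun _ _ => rfl
  · intro P hP
    simp only [Finset.mem_filter, mem_partialPairings, isPartialPairing_addPair] at hP ⊢
    exact ⟨hP, Finset.mem_insert_self _ _⟩
  · intro P hP
    simp only [Finset.coe_filter, Set.mem_ofPred_eq, mem_partialPairings] at hP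
    obtain ⟨Q, rfl⟩ := exists_addPair j hP.1 hP.2
    exact ⟨Q, by simpa [mem_partialPairings, isPartialPairing_addPair] using hP.1, rfl⟩

/-! ### The recursion for the closed formula -/

theorem wedgeList_map {V : Type} [AddCommGroup V] [Module ℂ V] {m n : ℕ} (v : Fin n → V)
    (e : Fin m → Fin n) (L : List (Fin m)) :
    wedgeList v (L.map e) = wedgeList (v ∘ e) L := by
  simp [wedgeList, Function.comp_def]

theorem filter_ne_eq_map_skipEmb {m : ℕ} (j : Fin (m + 1)) :
    ((List.finRange (m + 2)).filter fun k => decide (k ≠ 0 ∧ k ≠ j.succ)) =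
      (List.finRange m).map (skipEmb j) := by
  refine List.SortedLT.eq_of_mem_iff ?_ ((skipEmb j).strictMono.sortedLT_listMap.2
    (List.sortedLT_finRange m)) fun k => ?_
  · exact ((List.sortedLT_finRange _).pairwise.filter _).sortedLT
  · rw [List.mem_filter, decide_eq_true_iff, ← exists_skipEmb]
    simp

/-- The pairings leaving `0` unpaired contribute `u 0 ∧ N(u 1 ∧ ⋯ ∧ u n)`. -/
theorem normalOrderRHS_succ {V : Type} [AddCommGroup V] [Module ℂ V]
    (B : V →ₗ[ℂ] V →ₗ[ℂ] ℂ) {n : ℕ} (u : Fin (n + 1) → V) :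
    normalOrderRHS B u = ExteriorAlgebra.ι ℂ (u 0) * normalOrderRHS B (u ∘ Fin.succ) +
      ∑ j : Fin n, ∑ P ∈ partialPairings (n + 1) with (0, j.succ) ∈ P,
        ((pairingSign P : ℂ) * (-1 : ℂ) ^ P.card * ∏ p ∈ P, B (u p.1) (u p.2)) •
          wedgeList u (unpairedList P) := by
  rw [normalOrderRHS, sum_partialPairings_succ, normalOrderRHS, Finset.mul_sum]
  congr 1
  refine Finset.sum_congr rfl fun P _ => ?_
  have hw : wedgeList u (0 :: (unpairedList P).map (Fin.succOrderEmb n)) =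
      ExteriorAlgebra.ι ℂ (u 0) * wedgeList (u ∘ Fin.succ) (unpairedList P) := by
    rw [wedgeList, List.map_cons, List.prod_cons, ← wedgeList, wedgeList_map]
    rfl
  rw [pairingSign_succ, unpairedList_succ, hw, mul_smul_comm]
  simp [relabel, Finset.prod_map, Function.Embedding.prodMap]

/-- The pairings containing `(0, j.succ)` contribute one contraction: `(-1) ^ j` comes from the
sign of the pairing, and one more `-1` from the number of pairs. -/
theorem sum_with_pair_eq {V : Type} [AddCommGroup V] [Module ℂ V]
    (B : V →ₗ[ℂ] V →ₗ[ℂ] ℂ) {m : ℕ} (u : Fin (m + 2) → V) (j : Fin (m + 1)) :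
    ∑ P ∈ partialPairings (m + 2) with (0, j.succ) ∈ P,
        ((pairingSign P : ℂ) * (-1 : ℂ) ^ P.card * ∏ p ∈ P, B (u p.1) (u p.2)) •
          wedgeList u (unpairedList P) =
      ((-1 : ℂ) ^ (j.succ : ℕ) * B (u 0) (u j.succ)) • normalOrderRHS B (u ∘ skipEmb j) := by
  rw [sum_with_pair, normalOrderRHS, Finset.smul_sum]
  refine Finset.sum_congr rfl fun P hP => ?_
  rw [smul_smul, pairingSign_addPair j (mem_partialPairings.1 hP), unpairedList_addPair,
    wedgeList_map, addPair, Finset.card_insert_of_notMem (not_mem_relabel j P),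
    Finset.prod_insert (not_mem_relabel j P)]
  congr 1
  simp [relabel, Finset.prod_map, Function.Embedding.prodMap, pow_succ]
  ring

/-- the normal ordering map satisfies the recursion
`N(v_n ∧ ⋯ ∧ v₁) = v_n ∧ N(v_{n−1} ∧ ⋯ ∧ v₁)
  + Σ_{i=1}^{n−1} (−1)^i B(v_n, v_{n−i}) N(v_{n−1} ∧ ⋯ ∧ v̂_{n−i} ∧ ⋯ ∧ v₁)`.
Here the factors are re-indexed in ascending order, `u j := v_{n−j}` for `j = 0, …, n`
(so that there are `n + 1 ≥ 1` factors `u 0 ∧ u 1 ∧ ⋯ ∧ u n`, `u 0` being the paper's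
outermost factor `v_n`), and the hat indicates omission of the factor. -/
theorem normal_ordering_recursion
    (V : Type) [AddCommGroup V] [Module ℂ V]
    (B : V →ₗ[ℂ] V →ₗ[ℂ] ℂ) (hB : ∀ x : V, B x x = 0)
    (N : ExteriorAlgebra ℂ V →ₗ[ℂ] ExteriorAlgebra ℂ V)
    (hN : IsNormalOrdering B N) :
    ∀ (n : ℕ) (u : Fin (n + 1) → V),
      N (wedgeAll u) =
        ExteriorAlgebra.ι ℂ (u 0) * N (wedgeAll (u ∘ Fin.succ)) +
          ∑ i ∈ Finset.univ.filter (fun i : Fin (n + 1) => i ≠ 0),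
            ((-1 : ℂ) ^ (i : ℕ) * B (u 0) (u i)) •
              N (wedgeList u
                ((List.finRange (n + 1)).filter fun m => decide (m ≠ 0 ∧ m ≠ i))) := by
  intro n u
  rw [hN, hN, normalOrderRHS_succ]
  congr 1
  have hsum : ∀ f : Fin (n + 1) → ExteriorAlgebra ℂ V,
      ∑ i ∈ Finset.univ.filter (fun i : Fin (n + 1) => i ≠ 0), f i = ∑ j : Fin n, f j.succ := by
    intro f
    rw [Finset.sum_filter, Fin.sum_univ_succ]
    simp [Fin.succ_ne_zero]
  rw [hsum]
  refine Finset.sum_congr rfl fun j _ => ?_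
  obtain _ | m := n
  · exact j.elim0
  · rw [sum_with_pair_eq, filter_ne_eq_map_skipEmb, wedgeList_map, ← hN]
    rfl
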